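/- arXiv:1606.04660 — 2 statements merged into one kernel-verified Lean document; each statement's English description precedes it below -/
import Mathlib

section
/- In the abstract VMS setup, assume additionally that C_I > 0 satisfies ‖I_H v‖ ≤ C_I ‖v‖ for all v ∈ V_h. Let F : V_h → ℝ be a linear functional, let u_h ∈ V_h be the unique solution of a(u_h, v) = F(v) for all v ∈ V_h, and let u_H ∈ V_H be the unique solution of the ideal Petrov–Galerkin problem a(u_H, w) = F(w) for all w ∈ W_H. Then the method is stable in the sense that ‖u_H‖ ≤ C_I ‖u_h‖. -/
/-- The multiscale test space `W_H := {w ∈ V_h : a v w = 0 for all v ∈ R}`. -/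
def testSpace {V : Type*} [NormedAddCommGroup V] [InnerProductSpace ℝ V]
    (a : V →ₗ[ℝ] V →ₗ[ℝ] ℝ) (R : Submodule ℝ V) : Submodule ℝ V where
  carrier := {w | ∀ v ∈ R, a v w = 0}
  add_mem' := by
    intro x y hx hy v hv
    simp [map_add, hx v hv, hy v hv]
  zero_mem' := by
    intro v hv
    simp
  smul_mem' := by
    intro c x hx v hv
    simp [hx v hv]

/-!
Definiteness of `a` and solvability of the corrector problems make `R_H = ker I_H` equal to its
double orthogonal: if `a v w = 0` for all `w ∈ W_H`, then `w = v - C v` lies in `W_H` and satisfies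
`a w w = a v w - a (C v) w = 0`, so `v = C v ∈ R_H`. Applied to the Galerkin-orthogonal error
`v = u_H - u_h`, this gives `u_H = I_H u_H = I_H u_h`: the ideal method returns exactly the
projection of `u_h`, so the bound on `I_H` is the stability constant.
-/

section OrthogonalBilin

variable {K K' V N : Type*} [CommRing K] [CommRing K']
  [AddCommGroup V] [Module K V] [AddCommGroup N] [Module K' N] {σ τ : K →+* K'}
  {B : V →ₛₗ[σ] V →ₛₗ[τ] N} {S : Submodule K V}

theorem codisjoint_orthogonalBilin_of_exists_corrector
    (hS : ∀ v, ∃ c ∈ S, ∀ w ∈ S, B w c = B w v) : Codisjoint S (S.orthogonalBilin B) := by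
  refine Submodule.codisjoint_iff_exists_add_eq.mpr fun v ↦ ?_
  obtain ⟨c, hcS, hc⟩ := hS v
  refine ⟨c, v - c, hcS, fun w hw ↦ ?_, add_sub_cancel c v⟩
  rw [map_sub, hc w hw, sub_self]

theorem orthogonalBilin_flip_orthogonalBilin_of_codisjoint (hB : ∀ v, B v v = 0 → v = 0)
    (hS : Codisjoint S (S.orthogonalBilin B)) :
    (S.orthogonalBilin B).orthogonalBilin B.flip = S := by
  refine le_antisymm (fun v hv ↦ ?_) fun v hv w hw ↦ hw v hv
  obtain ⟨c, w, hc, hw, rfl⟩ := Submodule.codisjoint_iff_exists_add_eq.mp hS v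
  have hww : B w w = 0 := by
    simpa only [LinearMap.flip_apply, map_add, LinearMap.add_apply, hw c hc, zero_add] using hv w hw
  rwa [hB w hww, add_zero]

theorem eq_projection_of_petrovGalerkin (hB : ∀ v, B v v = 0 → v = 0)
    {P : V →ₗ[K] V} (hP : IsIdempotentElem P)
    (hcodisjoint : Codisjoint (LinearMap.ker P) ((LinearMap.ker P).orthogonalBilin B))
    {u x : V} (hx : x ∈ LinearMap.range P)
    (hxu : ∀ w ∈ (LinearMap.ker P).orthogonalBilin B, B x w = B u w) : x = P u := by
  have herror : x - u ∈ LinearMap.ker P := by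
    rw [← orthogonalBilin_flip_orthogonalBilin_of_codisjoint hB hcodisjoint]
    intro w hw
    rw [LinearMap.flip_apply, map_sub, LinearMap.sub_apply, hxu w hw, sub_self]
  calc x = P x := ((LinearMap.IsIdempotentElem.mem_range_iff hP).mp hx).symm
    _ = P u := LinearMap.sub_mem_ker_iff.mp herror

end OrthogonalBilin

theorem ideal_method_stability_general {K K' V N : Type*} [CommRing K] [CommRing K']
    [SeminormedAddCommGroup V] [Module K V] [AddCommGroup N] [Module K' N] {σ τ : K →+* K'}
    {B : V →ₛₗ[σ] V →ₛₗ[τ] N} (hB : ∀ v, B v v = 0 → v = 0)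
    {P : V →ₗ[K] V} (hP : IsIdempotentElem P)
    (hcorrector : ∀ v, ∃ c ∈ LinearMap.ker P, ∀ w ∈ LinearMap.ker P, B w c = B w v)
    {C : ℝ} (hbound : ∀ v, ‖P v‖ ≤ C * ‖v‖)
    {u x : V} (hx : x ∈ LinearMap.range P)
    (hxu : ∀ w ∈ (LinearMap.ker P).orthogonalBilin B, B x w = B u w) :
    ‖x‖ ≤ C * ‖u‖ := by
  rw [eq_projection_of_petrovGalerkin hB hP
    (codisjoint_orthogonalBilin_of_exists_corrector hcorrector) hx hxu]
  exact hbound u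

theorem eq_zero_of_coercive {V : Type*} [NormedAddCommGroup V] [Module ℝ V]
    {a : V →ₗ[ℝ] V →ₗ[ℝ] ℝ} {ε : ℝ} (hε : 0 < ε) (hcoer : ∀ v, ε * ‖v‖ ^ 2 ≤ a v v)
    (v : V) (hv : a v v = 0) : v = 0 := by
  have hnorm : ‖v‖ ^ 2 ≤ 0 := nonpos_of_mul_nonpos_right ((hcoer v).trans_eq hv) hε
  rwa [sq_nonpos_iff, norm_eq_zero] at hnorm

/-- **Stability of the ideal Petrov–Galerkin method.**
In the abstract VMS setup, assume moreover that `‖I_H v‖ ≤ C_I ‖v‖` for all `v ∈ V_h`.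
Let `u_h` solve `a u_h v = F v` for all `v ∈ V_h` and let `u_H ∈ V_H` solve the ideal
Petrov–Galerkin problem `a u_H w = F w` for all `w ∈ W_H`. Then `‖u_H‖ ≤ C_I ‖u_h‖`. -/
theorem ideal_method_stability
    {V_h : Type*} [NormedAddCommGroup V_h] [InnerProductSpace ℝ V_h]
    [FiniteDimensional ℝ V_h]
    (a : V_h →ₗ[ℝ] V_h →ₗ[ℝ] ℝ)
    (ε : ℝ) (hε : 0 < ε) (hcoer : ∀ v : V_h, ε * ‖v‖ ^ 2 ≤ a v v)
    (I_H : V_h →ₗ[ℝ] V_h) (hproj : I_H ∘ₗ I_H = I_H)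
    (C : V_h → V_h)
    (hC_mem : ∀ v : V_h, C v ∈ LinearMap.ker I_H)
    (hC : ∀ v : V_h, ∀ w ∈ LinearMap.ker I_H, a w (C v) = a w v)
    (C_I : ℝ) (hCI : 0 < C_I) (hI_bound : ∀ v : V_h, ‖I_H v‖ ≤ C_I * ‖v‖)
    (F : V_h →ₗ[ℝ] ℝ)
    (u_h : V_h) (hu_h : ∀ v : V_h, a u_h v = F v)
    (u_H : V_h) (hu_H_mem : u_H ∈ LinearMap.range I_H)
    (hu_H : ∀ w ∈ testSpace a (LinearMap.ker I_H), a u_H w = F w) :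
    ‖u_H‖ ≤ C_I * ‖u_h‖ := by
  exact ideal_method_stability_general (eq_zero_of_coercive hε hcoer) hproj
    (fun v ↦ ⟨C v, hC_mem v, hC v⟩) hI_bound hu_H_mem
    fun w hw ↦ (hu_H w hw).trans (hu_h w).symm
end

section
/- In the abstract VMS setup, assume additionally that C_I > 0 satisfies ‖I_H v‖ ≤ C_I ‖v‖ for all v ∈ V_h. Then the trial–test pairing (V_H, W_H) satisfies the inf-sup condition: for every w ∈ W_H with w ≠ 0 there exists u ∈ V_H with u ≠ 0 such that a(u, w) ≥ (ε / C_I) ‖u‖ ‖w‖. -/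
theorem apply_sub_self_mem_ker_of_isIdempotentElem {R M : Type*} [Semiring R] [AddCommGroup M]
    [Module R M] {P : M →ₗ[R] M} (hP : IsIdempotentElem P) (x : M) :
    P x - x ∈ LinearMap.ker P := by
  rw [LinearMap.mem_ker, map_sub, sub_eq_zero]
  exact LinearMap.congr_fun hP x

theorem apply_projection_left_of_mem_orthogonalBilin_ker {R R₁ R₂ M M₁ M₂ : Type*}
    [CommSemiring R] [CommSemiring R₁] [CommSemiring R₂] [AddCommGroup M] [Module R M]
    [AddCommGroup M₁] [Module R₁ M₁] [AddCommMonoid M₂] [Module R₂ M₂] {I₁ : R₁ →+* R}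
    {I₂ : R₂ →+* R} {B : M₁ →ₛₗ[I₁] M₂ →ₛₗ[I₂] M} {P : M₁ →ₗ[R₁] M₁} (hP : IsIdempotentElem P)
    (x : M₁) {y : M₂} (hy : y ∈ (LinearMap.ker P).orthogonalBilin B) : B (P x) y = B x y := by
  rw [← sub_eq_zero, ← LinearMap.sub_apply, ← map_sub]
  exact hy _ (apply_sub_self_mem_ker_of_isIdempotentElem hP x)

theorem testSpace_eq_orthogonalBilin {V : Type*} [NormedAddCommGroup V] [InnerProductSpace ℝ V]
    (a : V →ₗ[ℝ] V →ₗ[ℝ] ℝ) (R : Submodule ℝ V) : testSpace a R = R.orthogonalBilin a :=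
  rfl

theorem ideal_method_infSup_general {V : Type*} [NormedAddCommGroup V] [NormedSpace ℝ V]
    {a : V →ₗ[ℝ] V →ₗ[ℝ] ℝ} {P : V →ₗ[ℝ] V} (hP : IsIdempotentElem P) {ε c : ℝ}
    (hε : 0 < ε) (hcoer : ∀ w ∈ (LinearMap.ker P).orthogonalBilin a, ε * ‖w‖ ^ 2 ≤ a w w)
    (hc : 0 < c) (hbound : ∀ w ∈ (LinearMap.ker P).orthogonalBilin a, ‖P w‖ ≤ c * ‖w‖) :
    ∀ w ∈ (LinearMap.ker P).orthogonalBilin a, w ≠ 0 →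
      ∃ u ∈ LinearMap.range P, u ≠ 0 ∧ ε / c * ‖u‖ * ‖w‖ ≤ a u w := by
  intro w hw hw_ne
  have energy_eq : a (P w) w = a w w := apply_projection_left_of_mem_orthogonalBilin_ker hP w hw
  have energy_pos : 0 < a w w := lt_of_lt_of_le (by positivity) (hcoer w hw)
  have proj_ne_zero : P w ≠ 0 := by
    intro hPw
    rw [← energy_eq, hPw, LinearMap.map_zero₂] at energy_pos
    exact energy_pos.false
  refine ⟨P w, LinearMap.mem_range_self P w, proj_ne_zero, ?_⟩
  calc ε / c * ‖P w‖ * ‖w‖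
      ≤ ε / c * (c * ‖w‖) * ‖w‖ := by gcongr; exact hbound w hw
    _ = ε * ‖w‖ ^ 2 := by field_simp
    _ ≤ a w w := hcoer w hw
    _ = a (P w) w := energy_eq.symm

/-- **Inf-sup stability of the ideal trial–test pairing `(V_H, W_H)`.**
In the abstract VMS setup, assume moreover that `‖I_H v‖ ≤ C_I ‖v‖` for all `v ∈ V_h`.
Then for every `0 ≠ w ∈ W_H` there exists `0 ≠ u ∈ V_H` such that
`a u w ≥ (ε / C_I) ‖u‖ ‖w‖`. -/
theorem ideal_method_infSup
    {V_h : Type*} [NormedAddCommGroup V_h] [InnerProductSpace ℝ V_h]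
    [FiniteDimensional ℝ V_h]
    (a : V_h →ₗ[ℝ] V_h →ₗ[ℝ] ℝ)
    (ε : ℝ) (hε : 0 < ε) (hcoer : ∀ v : V_h, ε * ‖v‖ ^ 2 ≤ a v v)
    (I_H : V_h →ₗ[ℝ] V_h) (hproj : I_H ∘ₗ I_H = I_H)
    (C : V_h → V_h)
    (hC_mem : ∀ v : V_h, C v ∈ LinearMap.ker I_H)
    (hC : ∀ v : V_h, ∀ w ∈ LinearMap.ker I_H, a w (C v) = a w v)
    (C_I : ℝ) (hCI : 0 < C_I) (hI_bound : ∀ v : V_h, ‖I_H v‖ ≤ C_I * ‖v‖) :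
    ∀ w ∈ testSpace a (LinearMap.ker I_H), w ≠ 0 →
      ∃ u ∈ LinearMap.range I_H, u ≠ 0 ∧ ε / C_I * ‖u‖ * ‖w‖ ≤ a u w := by
  rw [testSpace_eq_orthogonalBilin]
  exact ideal_method_infSup_general hproj hε (fun v _ ↦ hcoer v) hCI (fun v _ ↦ hI_bound v)
end
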